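/- arXiv:2401.16884 — 2 statements merged into one kernel-verified Lean document; each statement's English description precedes it below -/
import Mathlib

section
/- Any two n-qubit Pauli strings either commute or anti-commute: for all v w : Fin n → Fin 4, either (P v) * (P w) = (P w) * (P v) or (P v) * (P w) = -((P w) * (P v)). -/
open Matrix Complex

/-- The single-qubit Pauli matrices. -/
noncomputable def pauli : Fin 4 → Matrix (Fin 2) (Fin 2) ℂ
  | 0 => !![1,0;0,1]
  | 1 => !![0,1;1,0]
  | 2 => !![0,-Complex.I;Complex.I,0]
  | 3 => !![1,0;0,-1]

/-- The `n`-qubit Pauli string indexed by `v : Fin n → Fin 4`. -/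
noncomputable def pauliString {n : ℕ} (v : Fin n → Fin 4) :
    Matrix (Fin n → Fin 2) (Fin n → Fin 2) ℂ :=
  Matrix.of fun i j => ∏ k, pauli (v k) (i k) (j k)

/-! A Pauli string is the tensor product of its single-qubit factors, and tensor products multiply
factor by factor. Swapping two strings therefore swaps the factors at each site; each swap costs a
sign, and the product of these signs is again a sign. Signs are taken in `ℤˣ`, which is closed under
products and has only the elements `1` and `-1`. -/

theorem eq_or_eq_neg_iff_exists_intUnits_smul {M : Type*} [AddCommGroup M] {x y : M} :
    x = y ∨ x = -y ↔ ∃ s : ℤˣ, x = s • y := by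
  constructor
  · rintro (h | h)
    · exact ⟨1, by rw [h, one_smul]⟩
    · exact ⟨-1, by rw [h, Units.neg_smul, one_smul]⟩
  · rintro ⟨s, h⟩
    rcases Int.units_eq_one_or s with rfl | rfl
    · exact .inl (by rw [h, one_smul])
    · exact .inr (by rw [h, Units.neg_smul, one_smul])

section PiKronecker

variable {ι R : Type*} [Fintype ι] {l m n : ι → Type*}

/-- The Kronecker product `⨂ k, A k` of a finite family of matrices over a commutative monoid, with
rows and columns indexed by families of row and column indices of the factors. -/
def piKronecker [CommMonoid R] (A : ∀ k, Matrix (m k) (n k) R) :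
    Matrix (∀ k, m k) (∀ k, n k) R :=
  Matrix.of fun i j => ∏ k, A k (i k) (j k)

theorem piKronecker_apply [CommMonoid R] (A : ∀ k, Matrix (m k) (n k) R)
    (i : ∀ k, m k) (j : ∀ k, n k) : piKronecker A i j = ∏ k, A k (i k) (j k) :=
  rfl

theorem piKronecker_smul {S : Type*} [CommMonoid S] [CommMonoid R] [MulAction S R]
    [IsScalarTower S R R] [SMulCommClass S R R] (s : ι → S) (A : ∀ k, Matrix (m k) (n k) R) :
    piKronecker (fun k => s k • A k) = (∏ k, s k) • piKronecker A := by
  ext i j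
  simp only [piKronecker_apply, Matrix.smul_apply, Finset.prod_smul]

theorem piKronecker_mul_piKronecker [DecidableEq ι] [CommSemiring R] [∀ k, Fintype (m k)]
    (A : ∀ k, Matrix (l k) (m k) R) (B : ∀ k, Matrix (m k) (n k) R) :
    piKronecker A * piKronecker B = piKronecker fun k => A k * B k := by
  ext i j
  simp only [Matrix.mul_apply, piKronecker_apply, Fintype.prod_sum, Finset.prod_mul_distrib]

theorem piKronecker_comm_or_anticomm [DecidableEq ι] [CommRing R] [∀ k, Fintype (n k)]
    {A B : ∀ k, Matrix (n k) (n k) R}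
    (h : ∀ k, A k * B k = B k * A k ∨ A k * B k = -(B k * A k)) :
    piKronecker A * piKronecker B = piKronecker B * piKronecker A ∨
      piKronecker A * piKronecker B = -(piKronecker B * piKronecker A) := by
  simp only [eq_or_eq_neg_iff_exists_intUnits_smul] at h ⊢
  choose s hs using h
  refine ⟨∏ k, s k, ?_⟩
  calc piKronecker A * piKronecker B
      = piKronecker fun k => A k * B k := piKronecker_mul_piKronecker A B
    _ = piKronecker fun k => s k • (B k * A k) := congrArg piKronecker (funext hs)
    _ = (∏ k, s k) • piKronecker fun k => B k * A k := piKronecker_smul s _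
    _ = (∏ k, s k) • (piKronecker B * piKronecker A) := by rw [piKronecker_mul_piKronecker]

end PiKronecker

theorem pauli_zero : pauli 0 = 1 :=
  Matrix.one_fin_two.symm

theorem pauli_anticomm {a b : Fin 4} (ha : a ≠ 0) (hb : b ≠ 0) (hab : a ≠ b) :
    pauli a * pauli b = -(pauli b * pauli a) := by
  fin_cases a <;> fin_cases b <;> first | contradiction | simp [pauli]

theorem pauli_comm_or_anticomm (a b : Fin 4) :
    pauli a * pauli b = pauli b * pauli a ∨ pauli a * pauli b = -(pauli b * pauli a) := by
  rcases eq_or_ne a 0 with rfl | ha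
  · exact .inl (by rw [pauli_zero, one_mul, mul_one])
  rcases eq_or_ne b 0 with rfl | hb
  · exact .inl (by rw [pauli_zero, one_mul, mul_one])
  rcases eq_or_ne a b with rfl | hab
  · exact .inl rfl
  · exact .inr (pauli_anticomm ha hb hab)

theorem pauliString_eq_piKronecker {n : ℕ} (v : Fin n → Fin 4) :
    pauliString v = piKronecker fun k => pauli (v k) :=
  rfl

/-- Any two `n`-qubit Pauli strings either commute or anti-commute. -/
theorem pauli_string_comm_or_anticomm (n : ℕ) (v w : Fin n → Fin 4) :
    pauliString v * pauliString w = pauliString w * pauliString v ∨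
    pauliString v * pauliString w = -(pauliString w * pauliString v) := by
  simp only [pauliString_eq_piKronecker]
  exact piKronecker_comm_or_anticomm fun k => pauli_comm_or_anticomm (v k) (w k)
end

section
/- Robust phase estimation signal for the noisy X rotation with tilted axis: let ξ and φ be real numbers, k a natural number, and set N = (Real.cos φ : ℂ) • X + (Real.sin φ : ℂ) • Z and X_{π/4}(ξ,φ) = (Real.cos ((π/8)*(1+ξ)) : ℂ) • 1 - (Complex.I * Real.sin ((π/8)*(1+ξ))) • N. Then Complex.normSq ((e₀ᴴ * (X_{π/4}(ξ,φ))^k * e₀) 0 0) = (1/2) * (1 + Real.cos (k*(π/4)*(1+ξ))) + (Real.sin (k*(π/8)*(1+ξ)))^2 * (Real.sin φ)^2, where e₀ : Matrix (Fin 2) (Fin 1) ℂ is the column vector (1, 0). -/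
open Matrix Complex Real

/-- Pauli matrices. -/
noncomputable def X : Matrix (Fin 2) (Fin 2) ℂ := !![0,1;1,0]
noncomputable def Z : Matrix (Fin 2) (Fin 2) ℂ := !![1,0;0,-1]

/-- The `|0⟩` state as a column vector. -/
noncomputable def e₀ : Matrix (Fin 2) (Fin 1) ℂ := !![1; 0]

/-!
Since `X` and `Z` are anticommuting involutions, the axis `N` is an involution, so `-iN` is a square
root of `-1` and sending `i` to `-iN` extends to an `ℝ`-algebra homomorphism from `ℂ` to the
matrices. It maps `exp (iθ)` to the rotation `cos θ - i sin θ N`, so that the `k`-th power of the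
rotation has angle `kθ`. Its `(0, 0)` entry is `cos kθ - i sin kθ sin φ`, because `N₀₀ = sin φ`.
-/

/-- The rotation `exp (-iθN)` generated by an involution `N`, written in its Euler form
`cos θ - i sin θ N`. The angle `θ` is half of the rotation angle on the Bloch sphere. -/
noncomputable def axisRotation {A : Type*} [Ring A] [Algebra ℂ A] (N : A) (θ : ℝ) : A :=
  (Real.cos θ : ℂ) • (1 : A) - (Complex.I * Real.sin θ) • N

/-- The rotation axis `N`: the Pauli `X` axis, tilted towards `Z` by the angle `φ`. -/
noncomputable def tiltedAxis (φ : ℝ) : Matrix (Fin 2) (Fin 2) ℂ :=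
  (Real.cos φ : ℂ) • X + (Real.sin φ : ℂ) • Z

section Involution

variable {A : Type*} [Ring A] [Algebra ℂ A] {N : A}

theorem neg_I_smul_mul_self (hN : N * N = 1) :
    (-(Complex.I • N)) * (-(Complex.I • N)) = -1 := by
  rw [neg_mul_neg, smul_mul_smul_comm, hN, Complex.I_mul_I, neg_one_smul]

theorem axisRotation_eq_liftAux_exp (hN : N * N = 1) (θ : ℝ) :
    axisRotation N θ =
      Complex.liftAux (-(Complex.I • N)) (neg_I_smul_mul_self hN)
        (Complex.exp (θ * Complex.I)) := by
  rw [Complex.liftAux_apply, Complex.exp_ofReal_mul_I_re, Complex.exp_ofReal_mul_I_im,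
    Algebra.algebraMap_eq_smul_one, axisRotation, Complex.coe_smul, smul_neg, sub_eq_add_neg,
    mul_comm, mul_smul, Complex.coe_smul]

theorem axisRotation_pow (hN : N * N = 1) (θ : ℝ) (k : ℕ) :
    axisRotation N θ ^ k = axisRotation N (k * θ) := by
  rw [axisRotation_eq_liftAux_exp hN, axisRotation_eq_liftAux_exp hN, ← map_pow,
    ← Complex.exp_nat_mul, Complex.ofReal_mul, Complex.ofReal_natCast, mul_assoc]

end Involution

theorem smul_add_smul_mul_self_of_anticommute {R A : Type*} [CommRing R] [Ring A] [Algebra R A]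
    {x z : A} (hx : x * x = 1) (hz : z * z = 1) (hxz : x * z + z * x = 0) (a b : R) :
    (a • x + b • z) * (a • x + b • z) = (a ^ 2 + b ^ 2) • (1 : A) := by
  calc (a • x + b • z) * (a • x + b • z)
      = a ^ 2 • (x * x) + b ^ 2 • (z * z) + (a * b) • (x * z + z * x) := by
        simp only [add_mul, mul_add, smul_mul_smul_comm]
        module
    _ = (a ^ 2 + b ^ 2) • (1 : A) := by
        rw [hx, hz, hxz, smul_zero, add_zero, add_smul]

theorem X_mul_X : X * X = 1 := by
  simp [X, Matrix.one_fin_two]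

theorem Z_mul_Z : Z * Z = 1 := by
  simp [Z, Matrix.one_fin_two]

theorem X_mul_Z_add_Z_mul_X : X * Z + Z * X = 0 := by
  ext i j
  fin_cases i <;> fin_cases j <;> simp [X, Z]

theorem tiltedAxis_mul_self (φ : ℝ) : tiltedAxis φ * tiltedAxis φ = 1 := by
  rw [tiltedAxis, smul_add_smul_mul_self_of_anticommute X_mul_X Z_mul_Z X_mul_Z_add_Z_mul_X,
    ← Complex.ofReal_pow, ← Complex.ofReal_pow, ← Complex.ofReal_add, Real.cos_sq_add_sin_sq,
    Complex.ofReal_one, one_smul]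

theorem tiltedAxis_zero_zero (φ : ℝ) : tiltedAxis φ 0 0 = Real.sin φ := by
  simp [tiltedAxis, X, Z]

theorem conjTranspose_e₀_mul_mul_e₀ (M : Matrix (Fin 2) (Fin 2) ℂ) :
    (e₀ᴴ * M * e₀) 0 0 = M 0 0 := by
  simp [e₀, Matrix.mul_apply]

theorem normSq_axisRotation_apply_self {n : Type*} [Fintype n] [DecidableEq n]
    {N : Matrix n n ℂ} {i : n} {r : ℝ} (hr : N i i = r) (θ : ℝ) :
    Complex.normSq (axisRotation N θ i i) = Real.cos θ ^ 2 + Real.sin θ ^ 2 * r ^ 2 := by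
  have hentry : axisRotation N θ i i =
      (Real.cos θ : ℂ) + ((-(Real.sin θ * r) : ℝ) : ℂ) * Complex.I := by
    simp only [axisRotation, Matrix.sub_apply, Matrix.smul_apply, Matrix.one_apply_eq, hr,
      smul_eq_mul]
    push_cast
    ring
  rw [hentry, Complex.normSq_add_mul_I, neg_sq, mul_pow]

/-- Robust phase estimation signal for the noisy `X` rotation with a tilted axis. -/
theorem rpe_signal_X (ξ φ : ℝ) (k : ℕ) :
    Complex.normSq
        ((e₀ᴴ *
            ((Real.cos ((π/8)*(1+ξ)) : ℂ) • (1 : Matrix (Fin 2) (Fin 2) ℂ) -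
             (Complex.I * Real.sin ((π/8)*(1+ξ))) •
               ((Real.cos φ : ℂ) • X + (Real.sin φ : ℂ) • Z)) ^ k *
          e₀) 0 0)
      = (1/2) * (1 + Real.cos (k*(π/4)*(1+ξ))) +
        (Real.sin (k*(π/8)*(1+ξ)))^2 * (Real.sin φ)^2 := by
  calc
    _ = Complex.normSq ((axisRotation (tiltedAxis φ) ((π/8)*(1+ξ)) ^ k) 0 0) := by
        rw [conjTranspose_e₀_mul_mul_e₀, axisRotation, tiltedAxis]
    _ = Real.cos (k * ((π/8)*(1+ξ))) ^ 2 +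
          Real.sin (k * ((π/8)*(1+ξ))) ^ 2 * Real.sin φ ^ 2 := by
        rw [axisRotation_pow (tiltedAxis_mul_self φ),
          normSq_axisRotation_apply_self (tiltedAxis_zero_zero φ)]
    _ = _ := by
        have hhalf : (k : ℝ) * (π/8) * (1+ξ) = k * ((π/8)*(1+ξ)) := by ring
        have hfull : (k : ℝ) * (π/4) * (1+ξ) = 2 * (k * ((π/8)*(1+ξ))) := by ring
        rw [hhalf, hfull, Real.cos_sq]
        ring
end
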